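/- In the algebra ℚ[Y_∞] of planar binary trees, for all trees t ∈ Y_p and w ∈ Y_q the product satisfies t * w = Σ u, the sum over all trees u ∈ Y_{p+q} with t/w ≤ u ≤ t\w in the weak order on Y_{p+q}. -/

import Mathlib

/-- Planar binary trees: `leaf` is the tree `|` (no interior vertex) and
`node l r = l ∨ r` is the grafting of `l` and `r` (their roots are joined to a new
vertex, which becomes the root). -/
inductive PBTree : Type
  | leaf : PBTree
  | node : PBTree → PBTree → PBTree
deriving DecidableEq

/-- The number of interior vertices of a planar binary tree: `t ∈ Yₙ` iff `t.size = n`. -/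
def PBTree.size : PBTree → ℕ
  | .leaf => 0
  | .node l r => l.size + r.size + 1

/-- The weak order on planar binary trees, generated transitively by
(a) `u ≤ u' → v ≤ v' → u∨v ≤ u'∨v'` and (b) `(u∨v)∨w ≤ u∨(v∨w)`. -/
inductive TreeLe : PBTree → PBTree → Prop
  | refl (t : PBTree) : TreeLe t t
  | graft {u u' v v' : PBTree} : TreeLe u u' → TreeLe v v' →
      TreeLe (.node u v) (.node u' v')
  | rotate (u v w : PBTree) : TreeLe (.node (.node u v) w) (.node u (.node v w))
  | trans {a b c : PBTree} : TreeLe a b → TreeLe b c → TreeLe a c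

/-- The `over` operation on trees: `u / v` is obtained by identifying the root of `u`
with the leftmost leaf of `v`; recursively `u / | = u` and `u / (vˡ∨vʳ) = (u/vˡ) ∨ vʳ`. -/
def treeOver : PBTree → PBTree → PBTree
  | u, .leaf => u
  | u, .node vl vr => .node (treeOver u vl) vr

/-- The `under` operation on trees: `u \ v` is obtained by identifying the rightmost leaf
of `u` with the root of `v`; recursively `| \ v = v` and `(uˡ∨uʳ) \ v = uˡ ∨ (uʳ\v)`. -/
def treeUnder : PBTree → PBTree → PBTree
  | .leaf, v => v
  | .node ul ur, v => .node ul (treeUnder ur v)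

attribute [local instance] Classical.propDecidable

/-- Bilinear extension of grafting in the left slot: `a ∨ r`. -/
noncomputable def graftL (a : PBTree →₀ ℚ) (r : PBTree) : PBTree →₀ ℚ :=
  Finsupp.mapDomain (fun t => PBTree.node t r) a

/-- Bilinear extension of grafting in the right slot: `l ∨ a`. -/
noncomputable def graftR (l : PBTree) (a : PBTree →₀ ℚ) : PBTree →₀ ℚ :=
  Finsupp.mapDomain (fun t => PBTree.node l t) a

/-- The associative product `*` of the algebra `ℚ[Y_∞] = ⊕_{n≥0} ℚ[Yₙ]` (whose basis is
the set of all planar binary trees, graded by size) on basis elements: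
`t * | = | * t = t` and `t * w = (t * wˡ) ∨ wʳ + tˡ ∨ (tʳ * w)` for `t = tˡ∨tʳ`,
`w = wˡ∨wʳ`. -/
noncomputable def treeMul : PBTree → PBTree → (PBTree →₀ ℚ)
  | .leaf, w => Finsupp.single w 1
  | t, .leaf => Finsupp.single t 1
  | .node tl tr, .node wl wr =>
      graftL (treeMul (.node tl tr) wl) wr + graftR tl (treeMul tr (.node wl wr))
termination_by t w => t.size + w.size
decreasing_by
  all_goals simp only [PBTree.size] <;> omega

/-!
Let `t = tˡ∨tʳ` and `w = wˡ∨wʳ`. If `u = uˡ∨uʳ` satisfies `t/w ≤ u ≤ t\w`, then `uˡ = tˡ` or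
`uʳ = wʳ`. Indeed a tree below `uˡ∨uʳ` has a vertex on its left spine whose left subtree is below
`uˡ`, and so has the size of `uˡ`. On the left spine of `t/w`, the left subtree of a vertex of `w`
contains all of `t`, while that of a vertex of `t` is smaller than `tˡ` unless the vertex is the
root of `t`. As `u ≤ t\w` forces `|tˡ| ≤ |uˡ|`, either `uˡ = tˡ` or `|t| ≤ |uˡ|`. By reflection,
either `uʳ = wʳ` or `|w| ≤ |uʳ|`; and `|uˡ| + |uʳ| < |t| + |w|`.
Thus the interval `[t/w, t\w]` is the disjoint union of `[t/wˡ, t\wˡ] ∨ wʳ` and `tˡ ∨ [tʳ/w, tʳ\w]`,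
which is the recursion defining the product.
-/

open PBTree

theorem treeOver_leaf_left (t : PBTree) : treeOver leaf t = t := by
  induction t with
  | leaf => rfl
  | node l r ihl _ => rw [treeOver, ihl]

theorem treeUnder_leaf_right (t : PBTree) : treeUnder t leaf = t := by
  induction t with
  | leaf => rfl
  | node l r _ ihr => rw [treeUnder, ihr]

theorem size_treeOver (t w : PBTree) : (treeOver t w).size = t.size + w.size := by
  induction w with
  | leaf => rfl
  | node l r ihl _ => simp only [treeOver, size, ihl]; omega

theorem TreeLe.size_eq {a b : PBTree} (h : TreeLe a b) : a.size = b.size := by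
  induction h with
  | refl => rfl
  | graft _ _ ihl ihr => simp only [size, ihl, ihr]
  | rotate => simp only [size]; omega
  | trans _ _ ih₁ ih₂ => exact ih₁.trans ih₂

theorem treeOver_node_le (a b w : PBTree) :
    TreeLe (treeOver (node a b) w) (node a (treeOver b w)) := by
  induction w with
  | leaf => exact .refl _
  | node l r ih _ => exact (TreeLe.graft ih (.refl r)).trans (.rotate _ _ _)

theorem TreeLe.exists_eq_treeOver {a c x y : PBTree} (h : TreeLe a (treeOver (node c x) y)) :
    ∃ c' x' y', a = treeOver (node c' x') y' ∧ TreeLe c' c ∧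
      TreeLe (treeOver x' y') (treeOver x y) := by
  generalize hb : treeOver (node c x) y = b at h
  induction h generalizing c x y with
  | refl => exact ⟨c, x, y, hb.symm, .refl _, .refl _⟩
  | @graft u u' v v' hu hv ihu _ =>
    cases y with
    | leaf =>
      obtain ⟨rfl, rfl⟩ := node.inj hb
      exact ⟨u, v, leaf, rfl, hu, hv⟩
    | node yl yr =>
      obtain ⟨hu', rfl⟩ := node.inj hb
      obtain ⟨c', x', y', rfl, hc, hxy⟩ := ihu hu'
      exact ⟨c', x', node y' v, rfl, hc, .graft hxy hv⟩
  | rotate u v w =>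
    cases y with
    | leaf =>
      obtain ⟨rfl, rfl⟩ := node.inj hb
      exact ⟨c, v, node leaf w, rfl, .refl _, .refl _⟩
    | node yl yr =>
      obtain ⟨rfl, rfl⟩ := node.inj hb
      exact ⟨c, x, node (node yl v) w, rfl, .refl _, .rotate _ _ _⟩
  | trans _ _ ih₁ ih₂ =>
    obtain ⟨c', x', y', hb', hc, hxy⟩ := ih₂ hb
    obtain ⟨c'', x'', y'', ha, hc', hxy'⟩ := ih₁ hb'.symm
    exact ⟨c'', x'', y'', ha, hc'.trans hc, hxy'.trans hxy⟩

theorem treeOver_node_inj_or_size_le {a b y c d z : PBTree}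
    (h : treeOver (node a b) y = treeOver (node c d) z) (hac : a.size ≤ c.size) :
    (a = c ∧ b = d ∧ y = z) ∨ (node a b).size ≤ c.size := by
  induction y generalizing z with
  | leaf =>
    cases z with
    | leaf =>
      obtain ⟨rfl, rfl⟩ := node.inj h
      exact .inl ⟨rfl, rfl, rfl⟩
    | node zl zr =>
      have ha := congrArg size (node.inj h).1
      simp only [size_treeOver, size] at ha
      omega
  | node yl yr ih _ =>
    cases z with
    | leaf =>
      have hc := congrArg size (node.inj h).1
      rw [size_treeOver] at hc
      omega
    | node zl zr =>
      obtain ⟨hl, rfl⟩ := node.inj h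
      exact (ih hl).imp_left fun ⟨ha, hb, hy⟩ => ⟨ha, hb, by rw [hy]⟩

theorem TreeLe.of_treeOver_node_le_node {a b y c d : PBTree}
    (h : TreeLe (treeOver (node a b) y) (node c d)) (hac : a.size ≤ c.size) :
    (TreeLe a c ∧ TreeLe (treeOver b y) d) ∨ (node a b).size ≤ c.size := by
  obtain ⟨c', d', z, heq, hc, hd⟩ := TreeLe.exists_eq_treeOver (y := leaf) h
  rw [← hc.size_eq] at hac ⊢
  refine (treeOver_node_inj_or_size_le heq hac).imp_left ?_
  rintro ⟨rfl, rfl, rfl⟩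
  exact ⟨hc, hd⟩

theorem TreeLe.size_left_le {a b c d : PBTree} (h : TreeLe (node a b) (node c d)) :
    c.size ≤ a.size := by
  by_contra! hac
  have hsize := h.size_eq
  rcases TreeLe.of_treeOver_node_le_node (y := leaf) h hac.le with ⟨hle, _⟩ | hle
  · exact hac.ne hle.size_eq
  · simp only [size] at hsize hle
    omega

theorem TreeLe.of_node_le_node {a b c d : PBTree} (h : TreeLe (node a b) (node c d))
    (hac : a.size = c.size) : TreeLe a c ∧ TreeLe b d := by
  refine (TreeLe.of_treeOver_node_le_node (y := leaf) h hac.le).resolve_right fun hle => ?_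
  simp only [size] at hle
  omega

theorem TreeLe.antisymm {a b : PBTree} (hab : TreeLe a b) (hba : TreeLe b a) : a = b := by
  induction a generalizing b with
  | leaf =>
    cases b with
    | leaf => rfl
    | node => cases hab.size_eq
  | node al ar ihl ihr =>
    cases b with
    | leaf => cases hab.size_eq
    | node bl br =>
      have hsize : al.size = bl.size := le_antisymm hba.size_left_le hab.size_left_le
      obtain ⟨hl, hr⟩ := hab.of_node_le_node hsize
      obtain ⟨hl', hr'⟩ := hba.of_node_le_node hsize.symm
      rw [ihl hl hl', ihr hr hr']

/-- The reflection of a planar tree in a vertical axis. It reverses the weak order and exchanges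
`over` and `under`, so that facts about left subtrees transfer to right subtrees. -/
def PBTree.mirror : PBTree → PBTree
  | .leaf => .leaf
  | .node l r => .node r.mirror l.mirror

namespace PBTree

theorem mirror_mirror (t : PBTree) : t.mirror.mirror = t := by
  induction t with
  | leaf => rfl
  | node l r ihl ihr => rw [mirror, mirror, ihl, ihr]

theorem size_mirror (t : PBTree) : t.mirror.size = t.size := by
  induction t with
  | leaf => rfl
  | node l r ihl ihr => rw [mirror, size, size, ihl, ihr, Nat.add_comm r.size]

theorem mirror_treeOver (t w : PBTree) :
    (treeOver t w).mirror = treeUnder w.mirror t.mirror := by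
  induction w with
  | leaf => rfl
  | node l r ihl _ => rw [treeOver, mirror, ihl, mirror, treeUnder]

theorem mirror_treeUnder (t w : PBTree) :
    (treeUnder t w).mirror = treeOver w.mirror t.mirror := by
  rw [← mirror_mirror (treeOver _ _), mirror_treeOver, mirror_mirror, mirror_mirror]

end PBTree

theorem TreeLe.mirror {a b : PBTree} (h : TreeLe a b) : TreeLe b.mirror a.mirror := by
  induction h with
  | refl => exact .refl _
  | graft _ _ ihl ihr => exact .graft ihr ihl
  | rotate => exact .rotate _ _ _
  | trans _ _ ih₁ ih₂ => exact ih₂.trans ih₁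

/-- The interval `[t/w, t\w]` of the weak order. -/
def treeInterval (t w : PBTree) : Set PBTree :=
  {u | TreeLe (treeOver t w) u ∧ TreeLe u (treeUnder t w)}

theorem mirror_mem_treeInterval {t w u : PBTree} (h : u ∈ treeInterval t w) :
    u.mirror ∈ treeInterval w.mirror t.mirror :=
  ⟨mirror_treeUnder t w ▸ h.2.mirror, mirror_treeOver t w ▸ h.1.mirror⟩

theorem size_of_mem_treeInterval {t w u : PBTree} (h : u ∈ treeInterval t w) :
    u.size = t.size + w.size := by
  rw [← h.1.size_eq, size_treeOver]

theorem setOf_treeLe_and_treeLe_self (t : PBTree) : {u | TreeLe t u ∧ TreeLe u t} = {t} :=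
  Set.ext fun _ => ⟨fun h => h.2.antisymm h.1, by rintro rfl; exact ⟨.refl _, .refl _⟩⟩

theorem treeInterval_leaf_left (w : PBTree) : treeInterval leaf w = {w} := by
  rw [treeInterval, treeOver_leaf_left, treeUnder, setOf_treeLe_and_treeLe_self]

theorem treeInterval_leaf_right (t : PBTree) : treeInterval t leaf = {t} := by
  rw [treeInterval, treeOver, treeUnder_leaf_right, setOf_treeLe_and_treeLe_self]

theorem node_mem_treeInterval_node_left {tr w u : PBTree} (tl : PBTree)
    (h : u ∈ treeInterval tr w) : node tl u ∈ treeInterval (node tl tr) w :=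
  ⟨(treeOver_node_le tl tr w).trans (.graft (.refl tl) h.1), .graft (.refl tl) h.2⟩

theorem node_mem_treeInterval_node_right {t wl u : PBTree} (wr : PBTree)
    (h : u ∈ treeInterval t wl) : node u wr ∈ treeInterval t (node wl wr) := by
  simpa only [mirror, mirror_mirror] using mirror_mem_treeInterval
    (node_mem_treeInterval_node_left wr.mirror (mirror_mem_treeInterval h))

theorem left_eq_or_size_le_of_mem_treeInterval {tl tr w ul ur : PBTree}
    (h : node ul ur ∈ treeInterval (node tl tr) w) :
    (ul = tl ∧ ur ∈ treeInterval tr w) ∨ (node tl tr).size ≤ ul.size := by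
  obtain ⟨hover, hunder⟩ := h
  refine (hover.of_treeOver_node_le_node hunder.size_left_le).imp_left ?_
  rintro ⟨htl, htr⟩
  obtain ⟨hul, hur⟩ := hunder.of_node_le_node htl.size_eq.symm
  exact ⟨hul.antisymm htl, htr, hur⟩

theorem right_eq_or_size_le_of_mem_treeInterval {t wl wr ul ur : PBTree}
    (h : node ul ur ∈ treeInterval t (node wl wr)) :
    (ur = wr ∧ ul ∈ treeInterval t wl) ∨ (node wl wr).size ≤ ur.size := by
  refine (left_eq_or_size_le_of_mem_treeInterval (mirror_mem_treeInterval h)).imp ?_ ?_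
  · rintro ⟨hur, hul⟩
    have hul' := mirror_mem_treeInterval hul
    rw [mirror_mirror, mirror_mirror, mirror_mirror] at hul'
    exact ⟨by rw [← mirror_mirror ur, hur, mirror_mirror], hul'⟩
  · intro hsize
    rwa [← mirror, size_mirror, size_mirror] at hsize

theorem treeInterval_node_node (tl tr wl wr : PBTree) :
    treeInterval (node tl tr) (node wl wr) =
      (node · wr) '' treeInterval (node tl tr) wl ∪ node tl '' treeInterval tr (node wl wr) := by
  ext u
  constructor
  · intro hu
    have hsize := size_of_mem_treeInterval hu
    cases u with
    | leaf => simp only [size] at hsize; omega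
    | node ul ur =>
      rcases left_eq_or_size_le_of_mem_treeInterval hu with ⟨rfl, hur⟩ | hleft
      · exact .inr ⟨ur, hur, rfl⟩
      rcases right_eq_or_size_le_of_mem_treeInterval hu with ⟨rfl, hul⟩ | hright
      · exact .inl ⟨ul, hul, rfl⟩
      simp only [size] at hsize hleft hright
      omega
  · rintro (⟨ul, hul, rfl⟩ | ⟨ur, hur, rfl⟩)
    · exact node_mem_treeInterval_node_right wr hul
    · exact node_mem_treeInterval_node_left tl hur

theorem disjoint_image_node_treeInterval (tl tr wl wr : PBTree) (s : Set PBTree) :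
    Disjoint ((node · wr) '' treeInterval (node tl tr) wl) (node tl '' s) := by
  rw [Set.disjoint_left]
  rintro _ ⟨ul, hul, rfl⟩ ⟨ur, _, heq⟩
  obtain ⟨rfl, _⟩ := node.inj heq
  have hsize := size_of_mem_treeInterval hul
  simp only [size] at hsize
  omega

theorem coe_mapDomain_eq_indicator_image {α β M : Type*} [AddCommMonoid M] [One M] {f : α → β}
    (hf : Function.Injective f) {a : α →₀ M} {s : Set α} (ha : ⇑a = s.indicator 1) :
    ⇑(a.mapDomain f) = (f '' s).indicator 1 := by
  ext b
  by_cases hb : b ∈ Set.range f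
  · obtain ⟨x, rfl⟩ := hb
    rw [Finsupp.mapDomain_apply hf, ha]
    simp only [Set.indicator_apply, hf.mem_set_image, Pi.one_apply]
  · rw [Finsupp.mapDomain_of_notMem_range a b hb,
      Set.indicator_of_notMem fun h => hb (Set.image_subset_range f s h)]

theorem coe_treeMul (t w : PBTree) : ⇑(treeMul t w) = (treeInterval t w).indicator 1 := by
  fun_induction treeMul t w with
  | case1 w => rw [treeInterval_leaf_left, Finsupp.set_indicator_singleton, Pi.one_apply]
  | case2 t _ => rw [treeInterval_leaf_right, Finsupp.set_indicator_singleton, Pi.one_apply]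
  | case3 tl tr wl wr ihl ihr =>
    have hL := coe_mapDomain_eq_indicator_image (f := (node · wr)) (fun _ _ h => (node.inj h).1) ihl
    have hR := coe_mapDomain_eq_indicator_image (f := node tl) (fun _ _ h => (node.inj h).2) ihr
    rw [Finsupp.coe_add, graftL, graftR, hL, hR, treeInterval_node_node,
      Set.indicator_union_of_disjoint (disjoint_image_node_treeInterval tl tr wl wr _)]
    rfl

/-- Theorem 5.1: in `ℚ[Y_∞]`, for all trees `t` and `w` the product
satisfies `t * w = Σ u`, the sum over all trees `u` with `t/w ≤ u ≤ t\w` in the weak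
order (stated coefficientwise: the coefficient of any tree `u` in `t * w` is `1` if
`t/w ≤ u ≤ t\w` and `0` otherwise). -/
theorem stmt15 (t w u : PBTree) :
    (treeMul t w) u =
      if TreeLe (treeOver t w) u ∧ TreeLe u (treeUnder t w) then 1 else 0 := by
  simp only [coe_treeMul, Set.indicator_apply, treeInterval, Set.mem_ofPred_eq, Pi.one_apply]
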